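/- PPT mixtures cannot violate the Svetlichny inequality: let ρ be a tripartite quantum state on ι_A × ι_B × ι_C admitting a decomposition ρ = σ_A + σ_B + σ_C into positive semidefinite Hermitian matrices with σ_A^{T_A}, σ_B^{T_B} and σ_C^{T_C} all positive semidefinite (i.e. ρ is a PPT mixture). Then for all dichotomic observables A₁, A₂, B₁, B₂, C₁, C₂ on the respective factors, the Svetlichny value satisfies S ≤ 4. -/

import Mathlib

open Matrix
open scoped Kronecker ComplexOrder

/-- Partial transpose on the first tensor factor. -/
def ptA {ιA ιB : Type*} (ρ : Matrix (ιA × ιB) (ιA × ιB) ℂ) : Matrix (ιA × ιB) (ιA × ιB) ℂ :=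
  fun p q => ρ (q.1, p.2) (p.1, q.2)

/-- Sum of the absolute values of the negative eigenvalues of a Hermitian matrix
(0 if the matrix is not Hermitian). -/
noncomputable def negEig {ι : Type*} [Fintype ι] [DecidableEq ι] (M : Matrix ι ι ℂ) : ℝ :=
  letI := Classical.dec M.IsHermitian
  if h : M.IsHermitian then ∑ i, max 0 (-(h.eigenvalues i)) else 0

/-- Partial transpose on the second factor of a tripartite space. -/
def ptB3 {ιA ιB ιC : Type*} (σ : Matrix (ιA × ιB × ιC) (ιA × ιB × ιC) ℂ) :
    Matrix (ιA × ιB × ιC) (ιA × ιB × ιC) ℂ :=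
  fun p q => σ (p.1, q.2.1, p.2.2) (q.1, p.2.1, q.2.2)

/-- Partial transpose on the third factor of a tripartite space. -/
def ptC3 {ιA ιB ιC : Type*} (σ : Matrix (ιA × ιB × ιC) (ιA × ιB × ιC) ℂ) :
    Matrix (ιA × ιB × ιC) (ιA × ιB × ιC) ℂ :=
  fun p q => σ (p.1, p.2.1, q.2.2) (q.1, q.2.1, p.2.2)

/-- The Svetlichny expression for a tripartite state and dichotomic observables. -/
noncomputable def svetlichnyValue {ιA ιB ιC : Type*} [Fintype ιA] [Fintype ιB] [Fintype ιC]
    (ρ : Matrix (ιA × ιB × ιC) (ιA × ιB × ιC) ℂ)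
    (A : Fin 2 → Matrix ιA ιA ℂ) (B : Fin 2 → Matrix ιB ιB ℂ) (C : Fin 2 → Matrix ιC ιC ℂ) : ℝ :=
  let E : Fin 2 → Fin 2 → Fin 2 → ℝ := fun x y z =>
    (Matrix.trace (ρ * ((A x) ⊗ₖ ((B y) ⊗ₖ (C z))))).re
  E 0 0 0 + E 0 0 1 + E 0 1 0 + E 1 0 0 - E 0 1 1 - E 1 0 1 - E 1 1 0 - E 1 1 1


/-- The sum-of-squares identity behind the bound. -/
lemma svet_sos {R : Type*} [Ring R] (a0 a1 b0 b1 c0 c1 : R)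
    (ha0 : a0 * a0 = 1) (ha1 : a1 * a1 = 1) (hb0 : b0 * b0 = 1) (hb1 : b1 * b1 = 1)
    (hc0 : c0 * c0 = 1) (hc1 : c1 * c1 = 1)
    (h1 : b0 * a0 = a0 * b0) (h2 : b0 * a1 = a1 * b0) (h3 : b1 * a0 = a0 * b1)
    (h4 : b1 * a1 = a1 * b1) (h5 : c0 * a0 = a0 * c0) (h6 : c0 * a1 = a1 * c0)
    (h7 : c1 * a0 = a0 * c1) (h8 : c1 * a1 = a1 * c1)
    (h9 : c0 * b0 = b0 * c0) (h10 : c0 * b1 = b1 * c0)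
    (h11 : c1 * b0 = b0 * c1) (h12 : c1 * b1 = b1 * c1)
    (m0 m1 : R) (hm0 : m0 = b0 * c0 + b0 * c1 + b1 * c0 - b1 * c1)
    (hm1 : m1 = b0 * c0 - b0 * c1 - b1 * c0 - b1 * c1)
    (K L N : R) (hK : K = (b0 * b1 - b1 * b0) - (c0 * c1 - c1 * c0))
    (hL : L = (b0 * b1 + b1 * b0) + (b0 * b1 + b1 * b0)
      + (a0 * a1 + a1 * a0) * (c0 * c1 + c1 * c0))
    (hN : N = (a0 * a1 - a1 * a0) * (c0 * c1 + c1 * c0)) :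
    (64 : ℤ) • (1 : R) = (2 : ℤ) • ((a0 * m0 + a1 * m1) * (a0 * m0 + a1 * m1)
      + (m0 * m0 + m1 * m1 + a1 * a0 * (m0 * m1) + a0 * a1 * (m1 * m0)))
      - (4 : ℤ) • (K * K) + L * L - N * N := by
  have e : ∀ {x y : R}, x * y = y * x → ∀ z, x * (y * z) = y * (x * z) := by
    intro x y h z; rw [← mul_assoc, h, mul_assoc]
  have s : ∀ {x : R}, x * x = 1 → ∀ z, x * (x * z) = z := by
    intro x h z; rw [← mul_assoc, h, one_mul]
  subst hm0 hm1 hK hL hN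
  simp only [mul_add, add_mul, mul_sub, sub_mul, mul_assoc, ha0, ha1, hb0, hb1, hc0, hc1,
    s ha0, s ha1, s hb0, s hb1, s hc0, s hc1, h1, h2, h3, h4, h5, h6, h7, h8, h9, h10, h11, h12,
    e h1, e h2, e h3, e h4, e h5, e h6, e h7, e h8, e h9, e h10, e h11, e h12, mul_one, one_mul]
  abel

/-- The real part of the trace pairing with a fixed matrix. -/
noncomputable def trPair {n : Type*} [Fintype n] (σ : Matrix n n ℂ) : Matrix n n ℂ →+ ℝ where
  toFun X := (Matrix.trace (σ * X)).re
  map_zero' := by simp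
  map_add' X Y := by simp [mul_add]

lemma trPair_apply {n : Type*} [Fintype n] (σ X : Matrix n n ℂ) :
    trPair σ X = (Matrix.trace (σ * X)).re := rfl

lemma trPair_nonneg {n : Type*} [Fintype n] {σ : Matrix n n ℂ} (h : σ.PosSemidef)
    (X : Matrix n n ℂ) : 0 ≤ trPair σ (Xᴴ * X) := by
  have h1 := (h.mul_mul_conjTranspose_same X).trace_nonneg
  rw [trPair_apply, ← mul_assoc, Matrix.trace_mul_comm, ← mul_assoc]
  exact (Complex.le_def.1 h1).1

lemma trPair_sq_nonneg {n : Type*} [Fintype n] {σ : Matrix n n ℂ} (h : σ.PosSemidef)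
    {X : Matrix n n ℂ} (hX : Xᴴ = X) : 0 ≤ trPair σ (X * X) := by
  have := trPair_nonneg h X
  rwa [hX] at this

lemma trPair_sq_nonpos {n : Type*} [Fintype n] {σ : Matrix n n ℂ} (h : σ.PosSemidef)
    {X : Matrix n n ℂ} (hX : Xᴴ = -X) : trPair σ (X * X) ≤ 0 := by
  have := trPair_nonneg h X
  rw [hX, neg_mul, map_neg] at this
  linarith

lemma trPair_ptA {m n : Type*} [Fintype m] [Fintype n] (σ : Matrix (m × n) (m × n) ℂ)
    (X : Matrix m m ℂ) (Y : Matrix n n ℂ) :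
    trPair (ptA σ) (Xᵀ ⊗ₖ Y) = trPair σ (X ⊗ₖ Y) := by
  rw [trPair_apply, trPair_apply]
  congr 1
  simp only [Matrix.trace, Matrix.diag, Matrix.mul_apply, ptA, Matrix.kroneckerMap_apply,
    Matrix.transpose_apply, Fintype.sum_prod_type]
  calc _ = ∑ x, ∑ x2, ∑ x1, ∑ x3, σ (x2, x1) (x, x3) * (X x x2 * Y x3 x1) :=
        Finset.sum_congr rfl fun _ _ => Finset.sum_comm
    _ = ∑ x2, ∑ x, ∑ x1, ∑ x3, σ (x2, x1) (x, x3) * (X x x2 * Y x3 x1) := Finset.sum_comm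
    _ = _ := Finset.sum_congr rfl fun _ _ => Finset.sum_comm

lemma svet_cut {ιA ιB ιC : Type*} [Fintype ιA] [Fintype ιB] [Fintype ιC]
    [DecidableEq ιA] [DecidableEq ιB] [DecidableEq ιC]
    (σ : Matrix (ιA × ιB × ιC) (ιA × ιB × ιC) ℂ)
    (hσ : σ.PosSemidef) (hσ' : (ptA σ).PosSemidef)
    (A : Fin 2 → Matrix ιA ιA ℂ) (B : Fin 2 → Matrix ιB ιB ℂ) (C : Fin 2 → Matrix ιC ιC ℂ)
    (hA : ∀ x, (A x).IsHermitian ∧ A x * A x = 1)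
    (hB : ∀ y, (B y).IsHermitian ∧ B y * B y = 1)
    (hC : ∀ z, (C z).IsHermitian ∧ C z * C z = 1) :
    svetlichnyValue σ A B C ≤ 4 * (Matrix.trace σ).re := by
  let a : Fin 2 → Matrix (ιA × ιB × ιC) (ιA × ιB × ιC) ℂ := fun x => A x ⊗ₖ 1
  let at' : Fin 2 → Matrix (ιA × ιB × ιC) (ιA × ιB × ιC) ℂ := fun x => (A x)ᵀ ⊗ₖ 1
  let b : Fin 2 → Matrix (ιA × ιB × ιC) (ιA × ιB × ιC) ℂ := fun x => 1 ⊗ₖ (B x ⊗ₖ 1)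
  let c : Fin 2 → Matrix (ιA × ιB × ιC) (ιA × ιB × ιC) ℂ := fun x => 1 ⊗ₖ (1 ⊗ₖ C x)
  let M0 : Matrix (ιB × ιC) (ιB × ιC) ℂ :=
    B 0 ⊗ₖ C 0 + B 0 ⊗ₖ C 1 + B 1 ⊗ₖ C 0 - B 1 ⊗ₖ C 1
  let M1 : Matrix (ιB × ιC) (ιB × ιC) ℂ :=
    B 0 ⊗ₖ C 0 - B 0 ⊗ₖ C 1 - B 1 ⊗ₖ C 0 - B 1 ⊗ₖ C 1
  have kk : ∀ (X X' : Matrix ιA ιA ℂ) (Y Y' : Matrix (ιB × ιC) (ιB × ιC) ℂ),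
      (X ⊗ₖ Y) * (X' ⊗ₖ Y') = (X * X') ⊗ₖ (Y * Y') := fun X X' Y Y' =>
    (Matrix.mul_kronecker_mul X X' Y Y').symm
  have kk2 : ∀ (X X' : Matrix ιB ιB ℂ) (Y Y' : Matrix ιC ιC ℂ),
      (X ⊗ₖ Y) * (X' ⊗ₖ Y') = (X * X') ⊗ₖ (Y * Y') := fun X X' Y Y' =>
    (Matrix.mul_kronecker_mul X X' Y Y').symm
  have ks : ∀ (X : Matrix ιA ιA ℂ) (Y Y' : Matrix (ιB × ιC) (ιB × ιC) ℂ),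
      X ⊗ₖ (Y - Y') = X ⊗ₖ Y - X ⊗ₖ Y' := fun X Y Y' => by
    ext i j; simp [mul_sub]
  have ka : ∀ (X : Matrix ιA ιA ℂ) (Y Y' : Matrix (ιB × ιC) (ιB × ιC) ℂ),
      X ⊗ₖ (Y + Y') = X ⊗ₖ Y + X ⊗ₖ Y' := fun X Y Y' => Matrix.kronecker_add X Y Y'
  have kone : (1 : Matrix ιA ιA ℂ) ⊗ₖ (1 : Matrix (ιB × ιC) (ιB × ιC) ℂ) = 1 :=
    Matrix.one_kronecker_one
  have kone2 : (1 : Matrix ιB ιB ℂ) ⊗ₖ (1 : Matrix ιC ιC ℂ) = 1 :=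
    Matrix.one_kronecker_one
  have aa : ∀ x, a x * a x = 1 := fun x => by simp only [a, kk, (hA x).2, mul_one, kone]
  have bb : ∀ x, b x * b x = 1 := fun x => by
    simp only [b, kk, kk2, (hB x).2, mul_one, kone, kone2]
  have cc : ∀ x, c x * c x = 1 := fun x => by
    simp only [c, kk, kk2, (hC x).2, mul_one, kone, kone2]
  have ba : ∀ x y, b x * a y = a y * b x := fun x y => by
    simp only [a, b, kk, mul_one, one_mul]
  have ca : ∀ x y, c x * a y = a y * c x := fun x y => by
    simp only [a, c, kk, mul_one, one_mul]
  have cb : ∀ x y, c x * b y = b y * c x := fun x y => by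
    simp only [b, c, kk, kk2, mul_one, one_mul]
  have aH : ∀ x, (a x)ᴴ = a x := fun x => by
    simp only [a, Matrix.conjTranspose_kronecker, (hA x).1.eq, Matrix.conjTranspose_one]
  have atH : ∀ x, (at' x)ᴴ = at' x := fun x => by
    have h : ((A x)ᵀ)ᴴ = (A x)ᵀ := (hA x).1.transpose.eq
    simp only [at', Matrix.conjTranspose_kronecker, h, Matrix.conjTranspose_one]
  have bH : ∀ x, (b x)ᴴ = b x := fun x => by
    simp only [b, Matrix.conjTranspose_kronecker, (hB x).1.eq, Matrix.conjTranspose_one]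
  have cH : ∀ x, (c x)ᴴ = c x := fun x => by
    simp only [c, Matrix.conjTranspose_kronecker, (hC x).1.eq, Matrix.conjTranspose_one]
  have M0H : M0ᴴ = M0 := by
    simp only [M0, Matrix.conjTranspose_add, Matrix.conjTranspose_sub,
      Matrix.conjTranspose_kronecker, (hB _).1.eq, (hC _).1.eq]
  have M1H : M1ᴴ = M1 := by
    simp only [M1, Matrix.conjTranspose_sub,
      Matrix.conjTranspose_kronecker, (hB _).1.eq, (hC _).1.eq]
  have hm0 : (1 : Matrix ιA ιA ℂ) ⊗ₖ M0 = b 0 * c 0 + b 0 * c 1 + b 1 * c 0 - b 1 * c 1 := by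
    simp only [M0, b, c, kk, kk2, ka, ks, mul_one, one_mul]
  have hm1 : (1 : Matrix ιA ιA ℂ) ⊗ₖ M1 = b 0 * c 0 - b 0 * c 1 - b 1 * c 0 - b 1 * c 1 := by
    simp only [M1, b, c, kk, kk2, ks, mul_one, one_mul]
  have key := svet_sos (a 0) (a 1) (b 0) (b 1) (c 0) (c 1) (aa _) (aa _) (bb _) (bb _) (cc _)
    (cc _) (ba _ _) (ba _ _) (ba _ _) (ba _ _) (ca _ _) (ca _ _) (ca _ _) (ca _ _)
    (cb _ _) (cb _ _) (cb _ _) (cb _ _) _ _ hm0 hm1 _ _ _ rfl rfl rfl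
  have hK := trPair_sq_nonpos hσ (X := (b 0 * b 1 - b 1 * b 0) - (c 0 * c 1 - c 1 * c 0)) (by
    simp only [Matrix.conjTranspose_sub, Matrix.conjTranspose_mul, bH, cH]; abel)
  have hL := trPair_sq_nonneg hσ (X := (b 0 * b 1 + b 1 * b 0) + (b 0 * b 1 + b 1 * b 0)
      + (a 0 * a 1 + a 1 * a 0) * (c 0 * c 1 + c 1 * c 0)) (by
    have h : (c 0 * c 1 + c 1 * c 0) * (a 0 * a 1 + a 1 * a 0)
        = (a 0 * a 1 + a 1 * a 0) * (c 0 * c 1 + c 1 * c 0) := by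
      have hc : ∀ x y, Commute (c x) (a y) := ca
      exact (((hc 0 0).mul_right (hc 0 1)).add_right ((hc 0 1).mul_right (hc 0 0))
        |>.mul_left (((hc 1 0).mul_right (hc 1 1)).add_right ((hc 1 1).mul_right (hc 1 0)))).add_left
        ((((hc 1 0).mul_right (hc 1 1)).add_right ((hc 1 1).mul_right (hc 1 0))).mul_left
        (((hc 0 0).mul_right (hc 0 1)).add_right ((hc 0 1).mul_right (hc 0 0))))
    simp only [Matrix.conjTranspose_add, Matrix.conjTranspose_mul, bH, cH, aH]
    rw [add_comm (b 1 * b 0), add_comm (c 1 * c 0), add_comm (a 1 * a 0), h])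
  have hN := trPair_sq_nonpos hσ
    (X := (a 0 * a 1 - a 1 * a 0) * (c 0 * c 1 + c 1 * c 0)) (by
    have h : (c 0 * c 1 + c 1 * c 0) * (a 0 * a 1 - a 1 * a 0)
        = (a 0 * a 1 - a 1 * a 0) * (c 0 * c 1 + c 1 * c 0) := by
      have hc : ∀ x y, Commute (c x) (a y) := ca
      exact (((hc 0 0).mul_right (hc 0 1)).sub_right ((hc 0 1).mul_right (hc 0 0))
        |>.mul_left (((hc 1 0).mul_right (hc 1 1)).sub_right ((hc 1 1).mul_right (hc 1 0)))).add_left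
        ((((hc 1 0).mul_right (hc 1 1)).sub_right ((hc 1 1).mul_right (hc 1 0))).mul_left
        (((hc 0 0).mul_right (hc 0 1)).sub_right ((hc 0 1).mul_right (hc 0 0))))
    simp only [Matrix.conjTranspose_add, Matrix.conjTranspose_sub, Matrix.conjTranspose_mul,
      cH, aH]
    rw [add_comm (c 1 * c 0), ← neg_sub (a 0 * a 1), mul_neg, h])
  -- the operators
  have hS : a 0 * (1 ⊗ₖ M0) + a 1 * (1 ⊗ₖ M1) = A 0 ⊗ₖ M0 + A 1 ⊗ₖ M1 := by
    simp only [a, kk, mul_one, one_mul]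
  have hT : (1 ⊗ₖ M0) * (1 ⊗ₖ M0) + (1 ⊗ₖ M1) * (1 ⊗ₖ M1)
      + a 1 * a 0 * ((1 ⊗ₖ M0) * (1 ⊗ₖ M1)) + a 0 * a 1 * ((1 ⊗ₖ M1) * (1 ⊗ₖ M0))
      = 1 ⊗ₖ (M0 * M0) + 1 ⊗ₖ (M1 * M1) + (A 1 * A 0) ⊗ₖ (M0 * M1)
        + (A 0 * A 1) ⊗ₖ (M1 * M0) := by
    simp only [a, kk, mul_one, one_mul]
  rw [hS, hT] at key
  set S := A 0 ⊗ₖ M0 + A 1 ⊗ₖ M1 with hSdef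
  let S' := (A 0)ᵀ ⊗ₖ M0 + (A 1)ᵀ ⊗ₖ M1
  have hSH : Sᴴ = S := by
    simp only [S, Matrix.conjTranspose_add, Matrix.conjTranspose_kronecker, (hA _).1.eq, M0H, M1H]
  have hSH' : S'ᴴ = S' := by
    simp only [S', Matrix.conjTranspose_add, Matrix.conjTranspose_kronecker,
      (hA _).1.transpose.eq, M0H, M1H]
  have g1 : trPair (ptA σ) S' = trPair σ S := by
    simp only [S, S', map_add, trPair_ptA]
  have g2 : trPair (ptA σ) 1 = trPair σ 1 := by
    have h := trPair_ptA σ (1 : Matrix ιA ιA ℂ) (1 : Matrix (ιB × ιC) (ιB × ιC) ℂ)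
    rwa [Matrix.transpose_one, kone] at h
  have At : ∀ x, (A x)ᵀ * (A x)ᵀ = (1 : Matrix ιA ιA ℂ)ᵀ := fun x => by
    rw [← Matrix.transpose_mul, (hA x).2]
  have g3 : trPair (ptA σ) (S' * S') = trPair σ (1 ⊗ₖ (M0 * M0) + 1 ⊗ₖ (M1 * M1)
      + (A 1 * A 0) ⊗ₖ (M0 * M1) + (A 0 * A 1) ⊗ₖ (M1 * M0)) := by
    simp only [S', mul_add, add_mul, kk, At]
    simp only [← Matrix.transpose_mul, map_add, trPair_ptA]
    ring
  have sq : ∀ X : Matrix (ιA × ιB × ιC) (ιA × ιB × ιC) ℂ,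
      (X - (4 : ℤ) • 1) * (X - (4 : ℤ) • 1) = X * X - (8 : ℤ) • X + (16 : ℤ) • 1 := by
    intro X
    noncomm_ring
  have p1 := trPair_sq_nonneg hσ (X := S - (4 : ℤ) • 1) (by
    rw [Matrix.conjTranspose_sub, hSH]; simp)
  have p2 := trPair_sq_nonneg hσ' (X := S' - (4 : ℤ) • 1) (by
    rw [Matrix.conjTranspose_sub, hSH']; simp)
  rw [sq, map_add, map_sub, map_zsmul, map_zsmul] at p1 p2
  rw [g1, g2, g3] at p2
  have key2 := congrArg (trPair σ) key
  rw [map_sub, map_add, map_sub, map_zsmul, map_zsmul, map_zsmul, map_add] at key2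
  simp only [zsmul_eq_mul] at key2 p1 p2
  push_cast at key2 p1 p2
  have t1 : trPair σ 1 = (Matrix.trace σ).re := by rw [trPair_apply, mul_one]
  have t2 : svetlichnyValue σ A B C = trPair σ S := by
    simp only [S, M0, M1, ka, ks, map_add, map_sub, svetlichnyValue, ← trPair_apply]
    ring
  rw [t2, ← t1]
  linarith

lemma trPair_submatrix {m n : Type*} [Fintype m] [Fintype n] (e : m ≃ n)
    (σ X : Matrix n n ℂ) : trPair (σ.submatrix e e) (X.submatrix e e) = trPair σ X := by
  rw [trPair_apply, trPair_apply, Matrix.submatrix_mul_equiv]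
  congr 1
  simp only [Matrix.trace, Matrix.diag, Matrix.submatrix_apply]
  exact e.sum_comp fun i => (σ * X) i i

lemma trace_submatrix_equiv' {m n : Type*} [Fintype m] [Fintype n] (e : m ≃ n)
    (σ : Matrix n n ℂ) : Matrix.trace (σ.submatrix e e) = Matrix.trace σ := by
  simp only [Matrix.trace, Matrix.diag, Matrix.submatrix_apply]
  exact e.sum_comp fun i => σ i i

/-- Bring the second factor to the front. -/
def eqB (ιA ιB ιC : Type*) : ιB × ιA × ιC ≃ ιA × ιB × ιC where
  toFun p := (p.2.1, p.1, p.2.2)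
  invFun p := (p.2.1, p.1, p.2.2)
  left_inv _ := rfl
  right_inv _ := rfl

/-- Bring the third factor to the front. -/
def eqC (ιA ιB ιC : Type*) : ιC × ιB × ιA ≃ ιA × ιB × ιC where
  toFun p := (p.2.2, p.2.1, p.1)
  invFun p := (p.2.2, p.2.1, p.1)
  left_inv _ := rfl
  right_inv _ := rfl

/-- PPT mixtures cannot violate the Svetlichny inequality: if
ρ = σ_A + σ_B + σ_C with all parts positive semidefinite and PPT across the
corresponding bipartitions, then the Svetlichny value is at most 4. -/
theorem ppt_mixtures_satisfy_svetlichny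
    {ιA ιB ιC : Type*} [Fintype ιA] [Fintype ιB] [Fintype ιC]
    [Nonempty ιA] [Nonempty ιB] [Nonempty ιC]
    [DecidableEq ιA] [DecidableEq ιB] [DecidableEq ιC]
    (ρ : Matrix (ιA × ιB × ιC) (ιA × ιB × ιC) ℂ) (hρ : ρ.PosSemidef)
    (htr : Matrix.trace ρ = 1)
    (σA σB σC : Matrix (ιA × ιB × ιC) (ιA × ιB × ιC) ℂ)
    (hdec : ρ = σA + σB + σC)
    (hσA : σA.PosSemidef) (hσB : σB.PosSemidef) (hσC : σC.PosSemidef)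
    (hσA' : (ptA σA).PosSemidef) (hσB' : (ptB3 σB).PosSemidef) (hσC' : (ptC3 σC).PosSemidef)
    (A : Fin 2 → Matrix ιA ιA ℂ) (B : Fin 2 → Matrix ιB ιB ℂ) (C : Fin 2 → Matrix ιC ιC ℂ)
    (hA : ∀ x, (A x).IsHermitian ∧ A x * A x = 1)
    (hB : ∀ y, (B y).IsHermitian ∧ B y * B y = 1)
    (hC : ∀ z, (C z).IsHermitian ∧ C z * C z = 1) :
    svetlichnyValue ρ A B C ≤ 4 := by
  have h1 := svet_cut σA hσA hσA' A B C hA hB hC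
  have h2 := svet_cut (σB.submatrix (eqB ιA ιB ιC) (eqB ιA ιB ιC)) (hσB.submatrix _)
    (hσB'.submatrix (eqB ιA ιB ιC)) B A C hB hA hC
  have h3 := svet_cut (σC.submatrix (eqC ιA ιB ιC) (eqC ιA ιB ιC)) (hσC.submatrix _)
    (hσC'.submatrix (eqC ιA ιB ιC)) C B A hC hB hA
  rw [trace_submatrix_equiv'] at h2 h3
  have kB : ∀ x y z, B y ⊗ₖ (A x ⊗ₖ C z) =
      (A x ⊗ₖ (B y ⊗ₖ C z)).submatrix (eqB ιA ιB ιC) (eqB ιA ιB ιC) := by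
    intro x y z; ext i j
    simp only [Matrix.kroneckerMap_apply, Matrix.submatrix_apply, eqB, Equiv.coe_fn_mk]; ring
  have kC : ∀ x y z, C z ⊗ₖ (B y ⊗ₖ A x) =
      (A x ⊗ₖ (B y ⊗ₖ C z)).submatrix (eqC ιA ιB ιC) (eqC ιA ιB ιC) := by
    intro x y z; ext i j
    simp only [Matrix.kroneckerMap_apply, Matrix.submatrix_apply, eqC, Equiv.coe_fn_mk]; ring
  have ht : (Matrix.trace σA).re + (Matrix.trace σB).re + (Matrix.trace σC).re = 1 := by
    rw [hdec, Matrix.trace_add, Matrix.trace_add] at htr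
    simpa using congrArg Complex.re htr
  have hadd : ∀ X, trPair ρ X = trPair σA X + trPair σB X + trPair σC X := by
    intro X
    simp only [trPair_apply, hdec, add_mul, Matrix.trace_add, Complex.add_re]
  simp only [svetlichnyValue, ← trPair_apply, kB, kC, trPair_submatrix, hadd] at h1 h2 h3 ⊢
  linarith
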